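/- Let A, B, A₃, …, Aₙ be n × n complex Hermitian matrices with A, A₃, …, Aₙ positive definite and B arbitrary Hermitian. Then D(A, B, A₃, …, Aₙ)² ≥ D(A, A, A₃, …, Aₙ) · D(B, B, A₃, …, Aₙ), with equality if and only if B = λA for some real number λ. -/

import Mathlib

open scoped ComplexOrder

/-- The mixed discriminant of `n` complex `n × n` matrices. -/
noncomputable def mixedDisc {n : ℕ} (A : Fin n → Matrix (Fin n) (Fin n) ℂ) : ℂ :=
  (n.factorial : ℂ)⁻¹ * ∑ σ : Equiv.Perm (Fin n), (Matrix.of fun i j => A (σ j) i j).det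

open Matrix Polynomial

/-- The mixed discriminant as a multilinear map. -/
noncomputable def mixedDiscMultilinear (n : ℕ) :
    MultilinearMap ℂ (fun _ : Fin n => Matrix (Fin n) (Fin n) ℂ) ℂ :=
  (n.factorial : ℂ)⁻¹ • ∑ σ : Equiv.Perm (Fin n),
    ((Matrix.detRowAlternating (R := ℂ) (n := Fin n)).toMultilinearMap.compLinearMap
      fun j => (LinearMap.proj j : (Fin n → Fin n → ℂ) →ₗ[ℂ] _) ∘ₗ
        (Matrix.transposeLinearEquiv (Fin n) (Fin n) ℂ ℂ).toLinearMap).domDomCongr σ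

lemma mixedDiscMultilinear_apply {n : ℕ} (A : Fin n → Matrix (Fin n) (Fin n) ℂ) :
    mixedDiscMultilinear n A = mixedDisc A := by
  simp only [mixedDiscMultilinear, mixedDisc, _root_.smul_apply,
    _root_.sum_apply, smul_eq_mul]
  congr 1
  refine Finset.sum_congr rfl fun σ _ => ?_
  rw [← Matrix.det_transpose]
  rfl

lemma mixedDisc_comp_perm {n : ℕ} (A : Fin n → Matrix (Fin n) (Fin n) ℂ)
    (τ : Equiv.Perm (Fin n)) : mixedDisc (A ∘ τ) = mixedDisc A := by
  unfold mixedDisc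
  congr 1
  exact Fintype.sum_equiv (Equiv.mulLeft τ) _ _ fun σ => rfl

lemma mixedDisc_const {n : ℕ} (X : Matrix (Fin n) (Fin n) ℂ) :
    mixedDisc (fun _ => X) = X.det := by
  have h : (n.factorial : ℂ) ≠ 0 := by exact_mod_cast n.factorial_ne_zero
  have e : (Matrix.of fun i j => X i j) = X := rfl
  simp [mixedDisc, Fintype.card_perm, e, h]

lemma star_mixedDisc {n : ℕ} {A : Fin n → Matrix (Fin n) (Fin n) ℂ}
    (hA : ∀ i, (A i).IsHermitian) : star (mixedDisc A) = mixedDisc A := by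
  simp only [mixedDisc, star_mul', star_sum, Matrix.det_apply', star_prod, star_inv₀, star_natCast,
    star_intCast, Matrix.of_apply]
  congr 1
  rw [Finset.sum_comm]
  conv_rhs => rw [Finset.sum_comm]
  refine Fintype.sum_equiv (Equiv.inv _) _ _ fun τ => ?_
  refine Fintype.sum_equiv (Equiv.mulRight τ⁻¹) _ _ fun σ => ?_
  simp only [Equiv.inv_apply, Equiv.Perm.sign_inv, Equiv.coe_mulRight]
  congr 1
  refine Fintype.prod_equiv τ _ _ fun j => ?_
  simp [(hA _).apply]

lemma mixedDisc_im {n : ℕ} {A : Fin n → Matrix (Fin n) (Fin n) ℂ}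
    (hA : ∀ i, (A i).IsHermitian) : (mixedDisc A).im = 0 :=
  Complex.conj_eq_iff_im.mp (star_mixedDisc hA)

lemma det_ne_zero_of_im_posDef {n : Type*} [Fintype n] [DecidableEq n] {H K : Matrix n n ℂ}
    (hH : H.IsHermitian) (hK : K.PosDef) : (H + Complex.I • K).det ≠ 0 := by
  intro h
  obtain ⟨v, hv, h0⟩ := Matrix.exists_mulVec_eq_zero_iff.mpr h
  have h1 : star v ⬝ᵥ ((H + Complex.I • K) *ᵥ v) = 0 := by rw [h0]; simp
  rw [Matrix.add_mulVec, Matrix.smul_mulVec, dotProduct_add, dotProduct_smul] at h1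
  have h2 : (star v ⬝ᵥ (H *ᵥ v)).im = 0 := hH.im_star_dotProduct_mulVec_self v
  have h3 := hK.dotProduct_mulVec_pos hv
  have h4 := congrArg Complex.im h1
  rw [Complex.lt_def] at h3
  simp [h2] at h4
  simp [h4] at h3

open scoped MatrixOrder Matrix.Norms.L2Operator in
lemma Matrix.PosDef.exists_smul_add_posDef {n : Type*} [Fintype n] [DecidableEq n]
    {P H : Matrix n n ℂ} (hP : P.PosDef) (hH : H.IsHermitian) :
    ∃ c : ℝ, 0 < c ∧ (c • P + H).PosDef := by
  rcases isEmpty_or_nonempty n with _ | _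
  · exact ⟨1, one_pos, (Subsingleton.elim _ _ : (1 : Matrix n n ℂ) = (1 : ℝ) • P + H) ▸ Matrix.PosDef.one⟩
  obtain ⟨r, hr, hrP⟩ := (CFC.exists_pos_algebraMap_le_iff (A := Matrix n n ℂ) (a := P) hP.1).2
    fun x hx => hP.isStrictlyPositive.spectrum_pos hx
  have h1 : (-H) ≤ algebraMap ℝ (Matrix n n ℂ) ‖-H‖ :=
    IsSelfAdjoint.le_algebraMap_norm_self (hH.neg)
  set N := ‖-H‖ with hN
  have hN0 : 0 ≤ N := norm_nonneg _
  refine ⟨(N + 1) / r, by positivity, ?_⟩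
  rw [Matrix.le_iff] at hrP h1
  have e : ((N + 1) / r) • P + H = (1 : Matrix n n ℂ) +
      (((N + 1) / r) • (P - algebraMap ℝ (Matrix n n ℂ) r) +
        (algebraMap ℝ (Matrix n n ℂ) N - -H)) := by
    simp only [Algebra.algebraMap_eq_smul_one, smul_sub, smul_smul]
    rw [div_mul_cancel₀ _ hr.ne']
    module
  rw [e]
  have h2 := Matrix.PosSemidef.smul hrP (show (0 : ℝ) ≤ (N + 1) / r by positivity)
  exact Matrix.PosDef.one.add_posSemidef (h2.add h1)

lemma MultilinearMap.exists_polynomial_eval_piecewise {ι R M : Type*} [CommSemiring R]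
    [AddCommMonoid M] [Module R M] [DecidableEq ι]
    (f : MultilinearMap R (fun _ : ι => M) R) (U V : ι → M) (r : Finset ι) :
    ∃ p : R[X], (∀ t, p.eval t = f (r.piecewise (t • V + U) U)) ∧
      p.coeff 1 = ∑ i ∈ r, f (Function.update U i (V i)) ∧
      p.coeff r.card = f (r.piecewise V U) := by
  refine ⟨∑ S ∈ r.powerset, monomial S.card (f (S.piecewise V U)), fun t => ?_, ?_, ?_⟩
  · rw [f.map_piecewise_add, Polynomial.eval_finsetSum]
    refine Finset.sum_congr rfl fun S _ => ?_
    have e : S.piecewise (t • V) U =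
        S.piecewise (fun i => t • S.piecewise V U i) (S.piecewise V U) := by
      ext i
      by_cases h : i ∈ S <;> simp [h]
    rw [e, f.map_piecewise_smul (fun _ => t), Polynomial.eval_monomial]
    simp [mul_comm]
  · simp only [Polynomial.finsetSum_coeff, Polynomial.coeff_monomial]
    rw [← Finset.sum_filter, ← Finset.powersetCard_eq_filter, Finset.powersetCard_one,
      Finset.sum_map]
    refine Finset.sum_congr rfl fun i _ => ?_
    simp [Finset.piecewise_singleton]
  · simp only [Polynomial.finsetSum_coeff, Polynomial.coeff_monomial]
    rw [Finset.sum_eq_single r]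
    · simp
    · intro S hS hne
      refine if_neg fun h => hne ?_
      exact Finset.eq_of_subset_of_card_le (Finset.mem_powerset.mp hS) h.ge
    · simp

lemma Polynomial.coeff_one_ne_zero_of_eval_ne_zero {p : ℂ[X]} (hdeg : 0 < p.degree)
    (hp : ∀ t : ℂ, 0 ≤ t.im → p.eval t ≠ 0) : p.coeff 1 ≠ 0 := by
  intro h
  have hd : p.derivative ≠ 0 := by
    intro h0
    have := Polynomial.derivative_eq_zero.mp h0
    rw [← Polynomial.natDegree_pos_iff_degree_pos] at hdeg
    omega
  have h0 : (0 : ℂ) ∈ p.derivative.rootSet ℂ := by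
    rw [Polynomial.mem_rootSet]
    refine ⟨hd, ?_⟩
    simpa [← Polynomial.coeff_zero_eq_aeval_zero, Polynomial.coeff_derivative] using h
  have hsub : convexHull ℝ (p.rootSet ℂ) ⊆ {z : ℂ | z.im < 0} := by
    refine convexHull_min (fun z hz => ?_) (convex_halfSpace_im_lt 0)
    by_contra hz'
    exact hp z (not_lt.mp hz') (by simpa using (Polynomial.mem_rootSet.mp hz).2)
  simpa using hsub (Polynomial.rootSet_derivative_subset_convexHull_rootSet hdeg h0)

lemma mixedDisc_ne_zero_of_im_posDef {n : ℕ} {P : Fin n → Matrix (Fin n) (Fin n) ℂ}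
    (hP : ∀ i, (P i).PosDef) (s : Finset (Fin n)) {H K : Matrix (Fin n) (Fin n) ℂ}
    (hH : H.IsHermitian) (hK : K.PosDef) :
    mixedDisc (s.piecewise P fun _ => H + Complex.I • K) ≠ 0 := by
  induction s using Finset.induction_on generalizing H K with
  | empty => simpa [mixedDisc_const] using det_ne_zero_of_im_posDef hH hK
  | insert a s ha ih =>
    set U := s.piecewise P fun _ => H + Complex.I • K with hU
    obtain ⟨p, hev, h1, htop⟩ := (mixedDiscMultilinear n).exists_polynomial_eval_piecewise
      U (fun _ => P a) sᶜ
    simp only [mixedDiscMultilinear_apply] at hev h1 htop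
    have hsum : p.coeff 1 = (sᶜ.card : ℂ) * mixedDisc (Function.update U a (P a)) := by
      rw [h1, ← nsmul_eq_mul]
      refine Finset.sum_eq_card_nsmul fun i hi => ?_
      rw [← mixedDisc_comp_perm (Function.update U a (P a)) (Equiv.swap a i)]
      congr 1
      have hUi : U i = U a := by simp [hU, ha, Finset.mem_compl.mp hi]
      ext1 j
      rcases eq_or_ne j i with rfl | hji
      · simp
      · rcases eq_or_ne j a with rfl | hja
        · simp [hji, hji.symm, hUi]
        · simp [hji, hja, Equiv.swap_apply_of_ne_of_ne hja hji]
    have heval : ∀ t : ℂ, 0 ≤ t.im → p.eval t ≠ 0 := by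
      intro t ht
      have e : sᶜ.piecewise (t • (fun _ => P a) + U) U = s.piecewise P fun _ =>
          (H + t.re • P a) + Complex.I • (K + t.im • P a) := by
        ext1 i
        by_cases hi : i ∈ s
        · simp [hU, hi]
        · simp only [hU, Finset.mem_compl, hi, not_false_eq_true, Finset.piecewise_eq_of_mem,
            Pi.add_apply, Pi.smul_apply, Finset.piecewise_eq_of_notMem]
          have ht' : t = (t.re : ℂ) + Complex.I * (t.im : ℂ) := by
            rw [mul_comm, Complex.re_add_im]
          conv_lhs => rw [ht']
          simp only [add_smul, mul_smul, smul_add, Complex.coe_smul]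
          abel
      rw [hev, e]
      refine ih (hH.add ((hP a).isHermitian.smul (IsSelfAdjoint.all _))) ?_
      exact hK.add_posSemidef ((hP a).posSemidef.smul ht)
    have hcard : sᶜ.card ≠ 0 := Finset.card_ne_zero_of_mem (Finset.mem_compl.mpr ha)
    have hdeg : 0 < p.degree := by
      refine lt_of_lt_of_le ?_ (Polynomial.le_degree_of_ne_zero (n := sᶜ.card) ?_)
      · exact_mod_cast Nat.pos_of_ne_zero hcard
      · have h2 := ih (H := 0) Matrix.isHermitian_zero (hP a)
        have e : (s.piecewise P fun _ => 0 + Complex.I • P a) =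
            sᶜ.piecewise (fun i => Complex.I • sᶜ.piecewise (fun _ => P a) U i)
              (sᶜ.piecewise (fun _ => P a) U) := by
          ext1 i
          by_cases hi : i ∈ s <;> simp [hU, hi]
        rw [e, ← mixedDiscMultilinear_apply,
          (mixedDiscMultilinear n).map_piecewise_smul (fun _ => Complex.I),
          mixedDiscMultilinear_apply, ← htop] at h2
        exact right_ne_zero_of_mul h2
    rw [Finset.piecewise_insert]
    have := Polynomial.coeff_one_ne_zero_of_eval_ne_zero hdeg heval
    rw [hsum] at this
    exact right_ne_zero_of_mul this

lemma mixedDisc_re_pos {n : ℕ} {P : Fin n → Matrix (Fin n) (Fin n) ℂ}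
    (hP : ∀ i, (P i).PosDef) : 0 < (mixedDisc P).re := by
  have hne : ∀ Q : Fin n → Matrix (Fin n) (Fin n) ℂ, (∀ i, (Q i).PosDef) →
      (mixedDisc Q).re ≠ 0 := fun Q hQ h => by
    refine mixedDisc_ne_zero_of_im_posDef hQ Finset.univ (H := 0) (K := 1)
      Matrix.isHermitian_zero Matrix.PosDef.one ?_
    rw [Finset.piecewise_univ]
    exact Complex.ext h (mixedDisc_im fun i => (hQ i).isHermitian)
  suffices h : ∀ s : Finset (Fin n), 0 < (mixedDisc (s.piecewise P fun _ => 1)).re by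
    simpa using h Finset.univ
  intro s
  induction s using Finset.induction_on with
  | empty => simp [mixedDisc_const]
  | insert a s ha ih =>
    set T : Fin n → Matrix (Fin n) (Fin n) ℂ := s.piecewise P fun _ => 1 with hT
    have hTP : ∀ i, (T i).PosDef := fun i => by
      by_cases hi : i ∈ s
      · simpa [hT, hi] using hP i
      · simpa [hT, hi] using Matrix.PosDef.one
    have hup : ∀ Y : Matrix (Fin n) (Fin n) ℂ, Y.PosDef → ∀ i,
        (Function.update T a Y i).PosDef := fun Y hY i => by
      rcases eq_or_ne i a with rfl | hi
      · simpa using hY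
      · simpa [hi] using hTP i
    rw [Finset.piecewise_insert]
    by_contra! hle
    set x := (mixedDisc T).re with hx
    set y := (mixedDisc (Function.update T a (P a))).re with hy
    refine hne _ (hup (x • P a + (-y) • T a) (((hP a).smul ih).add_posSemidef
      ((hTP a).posSemidef.smul (neg_nonneg.mpr hle)))) ?_
    rw [← mixedDiscMultilinear_apply, MultilinearMap.map_update_add,
      ← Complex.coe_smul x, ← Complex.coe_smul (-y),
      MultilinearMap.map_update_smul, MultilinearMap.map_update_smul]
    simp only [mixedDiscMultilinear_apply, Function.update_eq_self]
    simp [← hx, ← hy]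
    ring

lemma mixedDisc_cons_cons_comm {n : ℕ} (R : Fin n → Matrix (Fin (n + 2)) (Fin (n + 2)) ℂ)
    (A B : Matrix (Fin (n + 2)) (Fin (n + 2)) ℂ) :
    mixedDisc (Fin.cons A (Fin.cons B R)) = mixedDisc (Fin.cons B (Fin.cons A R)) := by
  rw [← mixedDisc_comp_perm _ (Equiv.swap 0 1)]
  congr 1
  ext1 j
  refine Fin.cases ?_ (fun j => Fin.cases ?_ (fun j => ?_) j) j
  · simp
  · simp
  · rw [Function.comp_apply, Equiv.swap_apply_of_ne_of_ne (Fin.succ_ne_zero _)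
      (by simp [Fin.ext_iff])]
    simp

/-- The real part of the mixed discriminant, with the first two arguments singled out. -/
noncomputable def mixedDiscForm {n : ℕ} (R : Fin n → Matrix (Fin (n + 2)) (Fin (n + 2)) ℂ)
    (A B : Matrix (Fin (n + 2)) (Fin (n + 2)) ℂ) : ℝ :=
  (mixedDisc (Fin.cons A (Fin.cons B R))).re

namespace mixedDiscForm

variable {n : ℕ} {R : Fin n → Matrix (Fin (n + 2)) (Fin (n + 2)) ℂ}
  {A B C : Matrix (Fin (n + 2)) (Fin (n + 2)) ℂ}

lemma comm : mixedDiscForm R A B = mixedDiscForm R B A :=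
  congrArg Complex.re (mixedDisc_cons_cons_comm R A B)

lemma update_swap (i : Fin n) : mixedDiscForm (Function.update R i C) A B =
    mixedDiscForm (Function.update R i B) A C := by
  unfold mixedDiscForm
  rw [← mixedDisc_comp_perm _ (Equiv.swap 1 i.succ.succ)]
  congr 2
  ext1 j
  refine Fin.cases ?_ (fun j => Fin.cases ?_ (fun j => ?_) j) j
  · rw [Function.comp_apply, Equiv.swap_apply_of_ne_of_ne (by simp)
      (Fin.succ_ne_zero _).symm]
    simp
  · simp [-Fin.cons_update]
  · rcases eq_or_ne j i with rfl | hj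
    · simp [-Fin.cons_update]
    · rw [Function.comp_apply, Equiv.swap_apply_of_ne_of_ne (by simp [Fin.ext_iff])
        (by simpa using hj)]
      simp [hj]

lemma add_left : mixedDiscForm R (A + B) C = mixedDiscForm R A C + mixedDiscForm R B C := by
  simp only [mixedDiscForm, ← mixedDiscMultilinear_apply, MultilinearMap.cons_add, Complex.add_re]

lemma smul_left (c : ℝ) : mixedDiscForm R (c • A) B = c * mixedDiscForm R A B := by
  simp only [mixedDiscForm, ← mixedDiscMultilinear_apply]
  rw [← Complex.coe_smul, MultilinearMap.cons_smul]
  simp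

lemma add_right : mixedDiscForm R A (B + C) = mixedDiscForm R A B + mixedDiscForm R A C := by
  rw [comm, add_left, comm, comm (A := C)]

lemma smul_right (c : ℝ) : mixedDiscForm R A (c • B) = c * mixedDiscForm R A B := by
  rw [comm, smul_left, comm]

lemma update_add (i : Fin n) (Y Z : Matrix (Fin (n + 2)) (Fin (n + 2)) ℂ) :
    mixedDiscForm (Function.update R i (Y + Z)) A B =
      mixedDiscForm (Function.update R i Y) A B + mixedDiscForm (Function.update R i Z) A B := by
  rw [update_swap, add_right, update_swap, update_swap (B := Z)]

lemma update_smul (i : Fin n) (c : ℝ) (Y : Matrix (Fin (n + 2)) (Fin (n + 2)) ℂ) :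
    mixedDiscForm (Function.update R i (c • Y)) A B =
      c * mixedDiscForm (Function.update R i Y) A B := by
  rw [update_swap, smul_right, update_swap]

lemma pos (hA : A.PosDef) (hB : B.PosDef) (hR : ∀ i, (R i).PosDef) :
    0 < mixedDiscForm R A B :=
  mixedDisc_re_pos fun i => Fin.cases hA (fun i => Fin.cases hB hR i) i

lemma ofReal_eq (hA : A.IsHermitian) (hB : B.IsHermitian) (hR : ∀ i, (R i).IsHermitian) :
    (mixedDiscForm R A B : ℂ) = mixedDisc (Fin.cons A (Fin.cons B R)) :=
  Complex.ext rfl (mixedDisc_im fun i => Fin.cases hA (fun i => Fin.cases hB hR i) i).symm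

/-- The **Alexandrov–Fenchel inequality** for mixed discriminants. -/
lemma mul_le_sq (hA : A.PosDef) (hB : B.IsHermitian) (hR : ∀ i, (R i).PosDef) :
    mixedDiscForm R A A * mixedDiscForm R B B ≤ mixedDiscForm R A B ^ 2 := by
  by_contra! hlt
  have hRH := fun i => (hR i).isHermitian
  have ha := pos hA hA hR
  set a := mixedDiscForm R A A with ha'
  set b := mixedDiscForm R A B with hb'
  set c := mixedDiscForm R B B with hc'
  set d := Real.sqrt (a * c - b ^ 2) with hd'
  have hd : 0 < d := Real.sqrt_pos.mpr (by linarith)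
  have hdd : d ^ 2 = a * c - b ^ 2 := Real.sq_sqrt (by linarith)
  have hH : (B + (-b / a) • A).IsHermitian :=
    hB.add (hA.isHermitian.smul (IsSelfAdjoint.all _))
  have hK : ((d / a) • A).PosDef := hA.smul (div_pos hd ha)
  have key := mixedDisc_ne_zero_of_im_posDef
    (P := Fin.cons A (Fin.cons A R)) (fun i => Fin.cases hA (fun i => Fin.cases hA hR i) i)
    ({0, 1}ᶜ) hH hK
  set H := B + (-b / a) • A with hH'
  set K := (d / a) • A with hK'
  have e : (({0, 1}ᶜ : Finset (Fin (n + 2))).piecewise (Fin.cons A (Fin.cons A R))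
      fun _ => H + Complex.I • K) =
      Fin.cons (H + Complex.I • K) (Fin.cons (H + Complex.I • K) R) := by
    ext1 j
    refine Fin.cases ?_ (fun j => Fin.cases ?_ (fun j => ?_) j) j
    · simp
    · simp
    · rw [Finset.piecewise_eq_of_mem _ _ _ (by simp [Fin.ext_iff])]
      simp
  have hadd : ∀ X Y Z, mixedDisc (Fin.cons (X + Y) (Fin.cons Z R)) =
      mixedDisc (Fin.cons X (Fin.cons Z R)) + mixedDisc (Fin.cons Y (Fin.cons Z R)) := by
    intro X Y Z
    simp only [← mixedDiscMultilinear_apply, MultilinearMap.cons_add]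
  have hsmul : ∀ (t : ℂ) X Z, mixedDisc (Fin.cons (t • X) (Fin.cons Z R)) =
      t * mixedDisc (Fin.cons X (Fin.cons Z R)) := by
    intro t X Z
    simp only [← mixedDiscMultilinear_apply, MultilinearMap.cons_smul, smul_eq_mul]
  refine key ?_
  rw [e, hadd H, hsmul _ K, mixedDisc_cons_cons_comm R H, mixedDisc_cons_cons_comm R K,
    hadd H _ H, hadd H _ K, hsmul _ K H, hsmul _ K K, mixedDisc_cons_cons_comm R K H,
    ← ofReal_eq hH hH hRH, ← ofReal_eq hH hK.isHermitian hRH,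
    ← ofReal_eq hK.isHermitian hK.isHermitian hRH]
  have e1 : mixedDiscForm R H K = 0 := by
    rw [hH', hK', smul_right, add_left, smul_left, comm, ← ha', ← hb']
    field_simp
    ring
  have e2 : mixedDiscForm R H H = mixedDiscForm R K K := by
    simp only [hH', hK', smul_right, add_left, add_right, smul_left]
    rw [comm (A := B) (B := A), ← ha', ← hb', ← hc']
    field_simp
    rw [hdd]
    ring
  rw [e1, e2, Complex.ofReal_zero]
  linear_combination (mixedDiscForm R K K : ℂ) * Complex.I_sq

lemma eq_zero_of_apply_self_eq_zero (hA : A.PosDef) (hB : B.IsHermitian)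
    (hR : ∀ i, (R i).PosDef) (hAB : mixedDiscForm R A B = 0) (hBB : mixedDiscForm R B B = 0)
    (hC : C.IsHermitian) : mixedDiscForm R B C = 0 := by
  have ha := pos hA hA hR
  have key : ∀ t : ℝ, mixedDiscForm R A A * (mixedDiscForm R C C + 2 * t * mixedDiscForm R B C)
      ≤ mixedDiscForm R A C ^ 2 := by
    intro t
    have h := mul_le_sq hA (hC.add (hB.smul (IsSelfAdjoint.all t))) hR
    simp only [add_left, add_right, smul_left, smul_right, hAB, hBB] at h
    rw [comm (A := C) (B := B)] at h
    linarith
  by_contra hne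
  have h := key ((mixedDiscForm R A C ^ 2 / mixedDiscForm R A A - mixedDiscForm R C C + 1)
    / (2 * mixedDiscForm R B C))
  have e : mixedDiscForm R A A * (mixedDiscForm R C C + 2 *
      ((mixedDiscForm R A C ^ 2 / mixedDiscForm R A A - mixedDiscForm R C C + 1)
        / (2 * mixedDiscForm R B C)) * mixedDiscForm R B C) =
      mixedDiscForm R A C ^ 2 + mixedDiscForm R A A := by
    field_simp
    ring
  linarith

lemma kernel_update (hB : B.IsHermitian) (hR : ∀ i, (R i).PosDef)
    (hker : ∀ C : Matrix _ _ ℂ, C.IsHermitian → mixedDiscForm R B C = 0) (i : Fin n)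
    {Y : Matrix (Fin (n + 2)) (Fin (n + 2)) ℂ} (hY : Y.PosDef) (hC : C.IsHermitian) :
    mixedDiscForm (Function.update R i Y) B C = 0 := by
  have hup : ∀ Z : Matrix (Fin (n + 2)) (Fin (n + 2)) ℂ, Z.PosDef → ∀ j,
      (Function.update R i Z j).PosDef := fun Z hZ j => by
    rcases eq_or_ne j i with rfl | hj
    · simpa using hZ
    · simpa [hj] using hR j
  have hRB : ∀ Z : Matrix (Fin (n + 2)) (Fin (n + 2)) ℂ, Z.PosDef →
      mixedDiscForm (Function.update R i Z) (R i) B = 0 := fun Z hZ => by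
    rw [comm, update_swap, Function.update_eq_self]
    exact hker Z hZ.isHermitian
  have hle : ∀ Z : Matrix (Fin (n + 2)) (Fin (n + 2)) ℂ, Z.PosDef →
      mixedDiscForm (Function.update R i Z) B B ≤ 0 := fun Z hZ => by
    have h := mul_le_sq (hR i) hB (hup Z hZ)
    rw [hRB Z hZ] at h
    have := pos (hR i) (hR i) (hup Z hZ)
    nlinarith
  obtain ⟨c, -, hc⟩ := (hR i).exists_smul_add_posDef hY.isHermitian.neg
  have h := hle _ hc
  rw [update_add, update_smul, Function.update_eq_self, hker B hB, ← neg_one_smul ℝ Y,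
    update_smul] at h
  exact eq_zero_of_apply_self_eq_zero (hR i) hB (hup Y hY) (hRB Y hY)
    (le_antisymm (hle Y hY) (by linarith)) hC

lemma kernel_posDef (hB : B.IsHermitian) (hR : ∀ i, (R i).PosDef)
    (hker : ∀ C : Matrix _ _ ℂ, C.IsHermitian → mixedDiscForm R B C = 0)
    {T : Fin n → Matrix (Fin (n + 2)) (Fin (n + 2)) ℂ} (hT : ∀ i, (T i).PosDef)
    (hC : C.IsHermitian) : mixedDiscForm T B C = 0 := by
  suffices h : ∀ s : Finset (Fin n), ∀ C : Matrix _ _ ℂ, C.IsHermitian →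
      mixedDiscForm (s.piecewise T R) B C = 0 by
    simpa using h Finset.univ C hC
  intro s
  induction s using Finset.induction_on with
  | empty => simpa using hker
  | insert a s ha ih =>
    intro C hC
    rw [Finset.piecewise_insert]
    refine kernel_update hB (fun i => ?_) ih a (hT a) hC
    by_cases hi : i ∈ s
    · simpa [hi] using hT i
    · simpa [hi] using hR i

lemma kernel_isHermitian
    (hker : ∀ T : Fin n → Matrix (Fin (n + 2)) (Fin (n + 2)) ℂ, (∀ i, (T i).PosDef) →
      mixedDiscForm T B C = 0)
    {T : Fin n → Matrix (Fin (n + 2)) (Fin (n + 2)) ℂ} (hT : ∀ i, (T i).IsHermitian) :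
    mixedDiscForm T B C = 0 := by
  suffices h : ∀ s : Finset (Fin n), ∀ P : Fin n → Matrix (Fin (n + 2)) (Fin (n + 2)) ℂ,
      (∀ i, (P i).PosDef) → mixedDiscForm (s.piecewise T P) B C = 0 by
    simpa using h Finset.univ (fun _ => 1) fun _ => Matrix.PosDef.one
  intro s
  induction s using Finset.induction_on with
  | empty => simpa using hker
  | insert a s ha ih =>
    intro P hP
    obtain ⟨c, -, hc⟩ := (hP a).exists_smul_add_posDef (hT a)
    have h := ih (Function.update P a (c • P a + T a)) fun i => by
      rcases eq_or_ne i a with rfl | hi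
      · simpa using hc
      · simpa [hi] using hP i
    rw [← s.update_piecewise_of_notMem _ _ ha, update_add, update_smul] at h
    have e : Function.update (s.piecewise T P) a (P a) = s.piecewise T P := by
      rw [Function.update_eq_self_iff, Finset.piecewise_eq_of_notMem _ _ _ ha]
    rw [e, ih P hP] at h
    rw [Finset.piecewise_insert]
    linarith

/-- Every Hermitian matrix in the kernel of the form at a positive definite tuple vanishes. -/
lemma eq_zero_of_kernel (hB : B.IsHermitian) (hR : ∀ i, (R i).PosDef)
    (hker : ∀ C : Matrix _ _ ℂ, C.IsHermitian → mixedDiscForm R B C = 0) : B = 0 := by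
  have hall : ∀ T : Fin (n + 2) → Matrix (Fin (n + 2)) (Fin (n + 2)) ℂ,
      (∀ i, (T i).IsHermitian) → (∃ i, T i = B) → mixedDisc T = 0 := by
    rintro T hT ⟨i, hi⟩
    rw [← mixedDisc_comp_perm T (Equiv.swap 0 i)]
    set S := T ∘ Equiv.swap 0 i with hS
    have hSH : ∀ i, (S i).IsHermitian := fun j => hT _
    have e : S = Fin.cons B (Fin.cons (S 1) fun j => S j.succ.succ) := by
      ext1 j
      refine Fin.cases ?_ (fun j => Fin.cases ?_ (fun j => ?_) j) j
      · simpa [hS] using hi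
      · simp
      · simp
    rw [e, ← ofReal_eq hB (hSH 1) fun j => hSH _, kernel_isHermitian (fun T hT =>
      kernel_posDef hB hR hker hT (hSH 1)) fun j => hSH _, Complex.ofReal_zero]
  have hdet : ∀ X : Matrix (Fin (n + 2)) (Fin (n + 2)) ℂ, X.IsHermitian →
      (B + X).det = X.det := by
    intro X hX
    rw [← mixedDisc_const, ← mixedDisc_const X, ← mixedDiscMultilinear_apply,
      show (fun _ : Fin (n + 2) => B + X) = (fun _ => B) + fun _ => X from rfl,
      MultilinearMap.map_add_univ, Finset.sum_eq_single ∅]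
    · simp [mixedDiscMultilinear_apply]
    · intro s _ hs
      obtain ⟨i, hi⟩ := Finset.nonempty_iff_ne_empty.mpr hs
      rw [mixedDiscMultilinear_apply]
      refine hall _ (fun j => ?_) ⟨i, by simp [hi]⟩
      by_cases hj : j ∈ s
      · simpa [hj] using hB
      · simpa [hj] using hX
    · simp
  rw [← hB.eigenvalues_eq_zero_iff]
  ext i
  have h := hdet ((-hB.eigenvalues i) • 1)
    (Matrix.isHermitian_one.smul (IsSelfAdjoint.all _))
  have h0 : (B + (-hB.eigenvalues i) • (1 : Matrix (Fin (n + 2)) (Fin (n + 2)) ℂ)).det = 0 := by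
    rw [← Matrix.exists_mulVec_eq_zero_iff]
    refine ⟨hB.eigenvectorBasis i, ?_, ?_⟩
    · intro hz
      exact hB.eigenvectorBasis.orthonormal.ne_zero i (by ext j; exact congrFun hz j)
    · rw [Matrix.add_mulVec, hB.mulVec_eigenvectorBasis, Matrix.smul_mulVec, Matrix.one_mulVec]
      simp
  rw [h0, ← Complex.coe_smul, Matrix.det_smul, Matrix.det_one, mul_one] at h
  simpa using h.symm

end mixedDiscForm

/-- complex Alexandrov–Fenchel inequality for mixed discriminants, with the
equality case: for Hermitian matrices `A, B, A₃, …, Aₙ` with `A, A₃, …, Aₙ` positive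
definite and `B` arbitrary Hermitian,
`D(A,B,A₃,…,Aₙ)² ≥ D(A,A,A₃,…,Aₙ)·D(B,B,A₃,…,Aₙ)`, with equality iff `B = λA`, `λ ∈ ℝ`.
(Mixed discriminants of Hermitian matrices are real, so we compare real parts.) -/
theorem af_mixedDisc_posDef (n : ℕ)
    (A B : Matrix (Fin (n + 2)) (Fin (n + 2)) ℂ)
    (rest : Fin n → Matrix (Fin (n + 2)) (Fin (n + 2)) ℂ)
    (hA : A.PosDef) (hrest : ∀ i, (rest i).PosDef) (hB : B.IsHermitian) :
    (mixedDisc (Fin.cons A (Fin.cons B rest))).re ^ 2 ≥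
        (mixedDisc (Fin.cons A (Fin.cons A rest))).re *
          (mixedDisc (Fin.cons B (Fin.cons B rest))).re ∧
      ((mixedDisc (Fin.cons A (Fin.cons B rest))).re ^ 2 =
          (mixedDisc (Fin.cons A (Fin.cons A rest))).re *
            (mixedDisc (Fin.cons B (Fin.cons B rest))).re ↔
        ∃ l : ℝ, B = l • A) := by
  change mixedDiscForm rest A B ^ 2 ≥ mixedDiscForm rest A A * mixedDiscForm rest B B ∧
    (mixedDiscForm rest A B ^ 2 = mixedDiscForm rest A A * mixedDiscForm rest B B ↔ _)
  refine ⟨mixedDiscForm.mul_le_sq hA hB hrest, fun heq => ?_, ?_⟩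
  · have ha := mixedDiscForm.pos hA hA hrest
    refine ⟨mixedDiscForm rest A B / mixedDiscForm rest A A, ?_⟩
    set l := mixedDiscForm rest A B / mixedDiscForm rest A A with hl
    have hH : (B + (-l) • A).IsHermitian :=
      hB.add (hA.isHermitian.smul (IsSelfAdjoint.all _))
    have hAH : mixedDiscForm rest A (B + (-l) • A) = 0 := by
      rw [mixedDiscForm.add_right, mixedDiscForm.smul_right, hl]
      field_simp
      ring
    have hBH : mixedDiscForm rest B (B + (-l) • A) = 0 := by
      rw [mixedDiscForm.add_right, mixedDiscForm.smul_right, mixedDiscForm.comm (A := B) (B := A),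
        hl]
      field_simp
      linarith
    have h := mixedDiscForm.eq_zero_of_kernel hH hrest fun C hC =>
      mixedDiscForm.eq_zero_of_apply_self_eq_zero hA hH hrest hAH
        (by rw [mixedDiscForm.add_left, mixedDiscForm.smul_left, hAH, hBH]; simp) hC
    rwa [neg_smul, ← sub_eq_add_neg, sub_eq_zero] at h
  · rintro ⟨l, rfl⟩
    simp only [mixedDiscForm.smul_left, mixedDiscForm.smul_right]
    ring
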